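/- arXiv:1604.04798 — 2 statements merged into one kernel-verified Lean document; each statement's English description precedes it below -/
import Mathlib

section
/- Let u_{1,0}, u_{2,0}, y_{1,0}, y_{2,0} be nonnegative, Lipschitz continuous and bounded functions on ℝ. Then there exist M_1, M_2 > 0 and T ∈ (0,1] with the following property: for every pair (u_1,u_2) ∈ C^{1,1/2}(ℝ×[0,T])² with ‖u_i‖_{1,1/2} ≤ M_i (i = 1,2), if y_i(x,t) = y_{i,0}(x)·exp(−A_i ∫_0^t f̃(u_i(x,s))ds) and w_i is the bounded solution in C^{2,1}(ℝ×(0,T]) ∩ C^{1,1/2}(ℝ×[0,T]) of the linear parabolic Cauchy problem (w_i)_t − α_i(y_i)(w_i)_{xx} + β_i(y_i)(w_i)_x = f̃_i(y_i,u_1,u_2) on ℝ×(0,T] with w_i(·,0) = u_{i,0}, then ‖w_i‖_{1,1/2} ≤ M_i for i = 1,2. In particular, the map (u_1,u_2) ↦ (w_1,w_2) is well defined on, and maps into, the set Σ = {(u_1,u_2) : ‖u_i‖_{1,1/2} ≤ M_i, i = 1,2}. -/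
open MeasureTheory

noncomputable section

/-- The modified Arrhenius function: `f̃(s) = exp(-E/s)` for `s > 0`, `f̃(s) = 0` for `s ≤ 0`. -/
def ftil (E s : ℝ) : ℝ := if 0 < s then Real.exp (-(E / s)) else 0

/-- Partial derivative in time of `u = u(x,t)`. -/
def pdT (u : ℝ → ℝ → ℝ) (x t : ℝ) : ℝ := deriv (fun s => u x s) t

/-- Partial derivative in space of `u = u(x,t)`. -/
def pdX (u : ℝ → ℝ → ℝ) (x t : ℝ) : ℝ := deriv (fun y => u y t) x

/-- Second partial derivative in space of `u = u(x,t)`. -/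
def pdXX (u : ℝ → ℝ → ℝ) (x t : ℝ) : ℝ := deriv (fun y => pdX u y t) x

/-- The class `C^{α,α/2}(S)`: bounded functions, Hölder continuous with exponent `α` in `x`
and `α/2` in `t` on `S`. -/
def HolderClass (S : Set (ℝ × ℝ)) (α : ℝ) (u : ℝ → ℝ → ℝ) : Prop :=
  ∃ C : ℝ, (∀ p ∈ S, |u p.1 p.2| ≤ C) ∧
    ∀ p ∈ S, ∀ q ∈ S,
      |u p.1 p.2 - u q.1 q.2| ≤ C * (|p.1 - q.1| ^ α + |p.2 - q.2| ^ (α / 2))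

/-- The class `C^{2,1}(S)`: twice continuously differentiable in `x`, once in `t`, on `S`. -/
def C21 (S : Set (ℝ × ℝ)) (u : ℝ → ℝ → ℝ) : Prop :=
  (∀ p ∈ S,
      DifferentiableAt ℝ (fun y => u y p.2) p.1 ∧
      DifferentiableAt ℝ (fun y => pdX u y p.2) p.1 ∧
      DifferentiableAt ℝ (fun s => u p.1 s) p.2) ∧
  ContinuousOn (fun p : ℝ × ℝ => u p.1 p.2) S ∧
  ContinuousOn (fun p : ℝ × ℝ => pdX u p.1 p.2) S ∧
  ContinuousOn (fun p : ℝ × ℝ => pdXX u p.1 p.2) S ∧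
  ContinuousOn (fun p : ℝ × ℝ => pdT u p.1 p.2) S

/-- The sup norm `‖g‖_∞` of a function on `ℝ`. -/
def supAbs (g : ℝ → ℝ) : ℝ := ⨆ x, |g x|

/-- The fuel concentration `y_i` determined from the temperature:
`y(x,t) = y₀(x)·exp(-A ∫₀ᵗ f̃(w(x,s)) ds)`. -/
def yfun (E A : ℝ) (y0 : ℝ → ℝ) (w : ℝ → ℝ → ℝ) (x t : ℝ) : ℝ :=
  y0 x * Real.exp (-A * ∫ s in (0:ℝ)..t, ftil E (w x s))

/-- The reaction function
`f̃ᵢ(y,u₁,u₂) = ((bᵢAᵢuᵢ + dᵢ)·y·f̃(uᵢ) + (-1)^i q (u₁ - u₂)) / (aᵢ + bᵢ y)`,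
where `ui` denotes the `i`-th component and `sgn = (-1)^i`. -/
def fitil (E q bi Ai di ai sgn y ui u1 u2 : ℝ) : ℝ :=
  ((bi * Ai * ui + di) * y * ftil E ui + sgn * q * (u1 - u2)) / (ai + bi * y)

/-- The upper solution `φ(t) = (M+β)e^{αt} - β` with
`M = max ‖u_{i,0}‖_∞`, `α = max A_i b_i ‖y_{i,0}‖_∞ / a_i`, `β = max d_i/(A_i b_i)`. -/
def phiUp (a b d A : Fin 2 → ℝ) (u0 y0 : Fin 2 → ℝ → ℝ) (t : ℝ) : ℝ :=
  (max (supAbs (u0 0)) (supAbs (u0 1)) + max (d 0 / (A 0 * b 0)) (d 1 / (A 1 * b 1))) *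
      Real.exp (max (A 0 * b 0 * supAbs (y0 0) / a 0) (A 1 * b 1 * supAbs (y0 1) / a 1) * t) -
    max (d 0 / (A 0 * b 0)) (d 1 / (A 1 * b 1))

/-- `u = (u₁,u₂)` is a solution of the Cauchy problem on `ℝ × [0,T]` in the class
`C^{2,1}(ℝ×(0,T]) ∩ C^{1,1/2}(ℝ×[0,T])`, lying in the sector `⟨0,φ⟩_T`. -/
def IsSol (E q : ℝ) (lam a b c d A : Fin 2 → ℝ) (u0 y0 : Fin 2 → ℝ → ℝ)
    (T : ℝ) (u : Fin 2 → ℝ → ℝ → ℝ) : Prop :=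
  (∀ i, C21 {p : ℝ × ℝ | 0 < p.2 ∧ p.2 ≤ T} (u i)) ∧
  (∀ i, HolderClass {p : ℝ × ℝ | 0 ≤ p.2 ∧ p.2 ≤ T} 1 (u i)) ∧
  (∀ i x, u i x 0 = u0 i x) ∧
  (∀ i x t, 0 < t → t ≤ T →
      pdT (u i) x t
        - lam i / (a i + b i * yfun E (A i) (y0 i) (u i) x t) * pdXX (u i) x t
        + c i / (a i + b i * yfun E (A i) (y0 i) (u i) x t) * pdX (u i) x t
      = fitil E q (b i) (A i) (d i) (a i) ((-1 : ℝ) ^ ((i : ℕ) + 1))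
          (yfun E (A i) (y0 i) (u i) x t) (u i x t) (u 0 x t) (u 1 x t)) ∧
  (∀ i x t, 0 ≤ t → t ≤ T → 0 ≤ u i x t ∧ u i x t ≤ phiUp a b d A u0 y0 t)

end

noncomputable section

/-- The norm `‖u‖_{1,1/2}` on `C^{1,1/2}(ℝ×[0,T])`:
`sup |u| + sup |u(x,t)-u(x',t')| / (|x-x'| + |t-t'|^{1/2})`. -/
def norm11 (T : ℝ) (u : ℝ → ℝ → ℝ) : ℝ :=
  sSup {r : ℝ | ∃ x t, 0 ≤ t ∧ t ≤ T ∧ r = |u x t|} +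
  sSup {r : ℝ | ∃ x t x' t', 0 ≤ t ∧ t ≤ T ∧ 0 ≤ t' ∧ t' ≤ T ∧ ¬(x = x' ∧ t = t') ∧
    r = |u x t - u x' t'| / (|x - x'| + |t - t'| ^ (1/2 : ℝ))}

end

/-!
No heat kernel is needed: every estimate comes from the maximum principle, with constants that only
depend on the Lipschitz bounds of the coefficients. Let `w_t - σ² w_xx + β w_x = F` with `σ`, `β`,
`F` bounded and Lipschitz in `x` with constant `C`, and let `w(·, 0)` be `L₀`-Lipschitz.

* Doubling the variables, `w(x, t) - w(x', t)` solves an equation on `ℝ²` whose diffusion acts only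
  in the direction `(σ(x, t), σ(x', t))`. The difference of the two components is at most
  `C |x - x'|`, so `Λ(t) √(h² + (x - x')²)` is a supersolution once `Λ' ≥ C + (C² + C) Λ`. Letting
  `h → 0` shows that `w(·, t)` is `Λ(t)`-Lipschitz.
* Starting from a time `t₀` at which `w` is `L`-Lipschitz, `w(x₀, t₀) + L √(h² + (x - x₀)²)` plus a
  multiple of `t - t₀` is a barrier; the choice `h = √(t - t₀)` gives
  `|w(x₀, t) - w(x₀, t₀)| ≤ L (1 + sup σ²) √(t - t₀) + C (L + 1) (t - t₀)`.

Hence `‖w‖_{1,1/2}` is at most `L₀ + L₀ (1 + sup σ²) + o(1)` as `T → 0`. For the linearized problem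
`sup σ² ≤ λ / a` does not involve the radii `Mᵢ`, on which only `C` depends. So one fixes `Mᵢ` above
the limit value first, and then takes `T` small.
-/

/-! ### The maximum principle for degenerate parabolic operators -/

section MaximumPrinciple

open Set Filter Topology

lemma hasDerivAt_nonneg_of_forall_le_left {f : ℝ → ℝ} {f' a b : ℝ} (hf : HasDerivAt f f' b)
    (hab : a < b) (hmax : ∀ s ∈ Icc a b, f s ≤ f b) : 0 ≤ f' := by
  refine ge_of_tendsto (hasDerivAt_iff_tendsto_slope_left_right.1 hf).1 ?_
  filter_upwards [Ioo_mem_nhdsLT hab] with s hs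
  rw [slope_def_field]
  exact div_nonneg_of_nonpos (sub_nonpos.2 (hmax s ⟨hs.1.le, hs.2.le⟩)) (sub_nonpos.2 hs.2.le)

lemma second_deriv_nonpos_of_isLocalMax {f f' : ℝ → ℝ} {f'' a : ℝ}
    (hf : ∀ s, HasDerivAt f (f' s) s) (hf' : HasDerivAt f' f'' a) (hmax : IsLocalMax f a) :
    f'' ≤ 0 := by
  by_contra! hpos
  have hderiv : deriv f = f' := funext fun s => (hf s).deriv
  have hmin : IsLocalMin f a := isLocalMin_of_deriv_deriv_pos (by rwa [hderiv, hf'.deriv])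
    hmax.deriv_eq_zero (hf a).continuousAt
  have hconst : f =ᶠ[𝓝 a] fun _ => f a := by
    filter_upwards [hmax, hmin] with s h₁ h₂ using le_antisymm h₁ h₂
  have hzero : f' =ᶠ[𝓝 a] fun _ => 0 := by simpa [hderiv] using hconst.deriv
  exact hpos.ne' (by simpa [hf'.deriv] using hzero.deriv_eq)

section Operator

variable {E F : Type*} [AddCommGroup E] [Module ℝ E] [AddCommGroup F] [Module ℝ F]

/-- `ℓ` is the value at `(z, t)` of the parabolic operator `∂ₜV - D²_ξ V + D_η V`, with a second
derivative in the single direction `ξ` and a first derivative in the direction `η`. In dimension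
one this is `V_t - ξ² V_xx + η V_x`; doubling the variables of such an equation again leads to an
operator of this kind, degenerate in the directions transversal to `ξ`. -/
def HasParabolicDerivAt (V : E → ℝ → ℝ) (ξ η z : E) (t ℓ : ℝ) : Prop :=
  ∃ (Vt Vη Vξξ : ℝ) (Vξ : E → ℝ), HasDerivAt (V z) Vt t ∧
    HasLineDerivAt ℝ (fun y => V y t) Vη z η ∧
    (∀ y, HasLineDerivAt ℝ (fun y => V y t) (Vξ y) y ξ) ∧ HasLineDerivAt ℝ Vξ Vξξ z ξ ∧
    ℓ = Vt - Vξξ + Vη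

namespace HasParabolicDerivAt

variable {V W : E → ℝ → ℝ} {ξ η z : E} {t ℓ m : ℝ}

lemma sub (hV : HasParabolicDerivAt V ξ η z t ℓ) (hW : HasParabolicDerivAt W ξ η z t m) :
    HasParabolicDerivAt (fun y s => V y s - W y s) ξ η z t (ℓ - m) := by
  obtain ⟨Vt, Vη, Vξξ, Vξ, hVt, hVη, hVξ, hVξξ, rfl⟩ := hV
  obtain ⟨Wt, Wη, Wξξ, Wξ, hWt, hWη, hWξ, hWξξ, rfl⟩ := hW
  exact ⟨Vt - Wt, Vη - Wη, Vξξ - Wξξ, fun y => Vξ y - Wξ y, HasDerivAt.sub hVt hWt,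
    HasDerivAt.sub hVη hWη, fun y => HasDerivAt.sub (hVξ y) (hWξ y),
    HasDerivAt.sub hVξξ hWξξ, by ring⟩

lemma const_mul (hV : HasParabolicDerivAt V ξ η z t ℓ) (c : ℝ) :
    HasParabolicDerivAt (fun y s => c * V y s) ξ η z t (c * ℓ) := by
  obtain ⟨Vt, Vη, Vξξ, Vξ, hVt, hVη, hVξ, hVξξ, rfl⟩ := hV
  exact ⟨c * Vt, c * Vη, c * Vξξ, fun y => c * Vξ y, HasDerivAt.const_mul c hVt,
    HasDerivAt.const_mul c hVη, fun y => HasDerivAt.const_mul c (hVξ y),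
    HasDerivAt.const_mul c hVξξ, by ring⟩

lemma neg (hV : HasParabolicDerivAt V ξ η z t ℓ) :
    HasParabolicDerivAt (fun y s => -V y s) ξ η z t (-ℓ) := by
  simpa using hV.const_mul (-1)

lemma comp_linearMap {V : F → ℝ → ℝ} (L : E →ₗ[ℝ] F)
    (hV : HasParabolicDerivAt V (L ξ) (L η) (L z) t ℓ) :
    HasParabolicDerivAt (fun y s => V (L y) s) ξ η z t ℓ := by
  obtain ⟨Vt, Vη, Vξξ, Vξ, hVt, hVη, hVξ, hVξξ, rfl⟩ := hV
  refine ⟨Vt, Vη, Vξξ, fun y => Vξ (L y), hVt, ?_, fun y => ?_, ?_, rfl⟩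
  · simpa only [HasLineDerivAt, map_add, map_smul] using hVη
  · simpa only [HasLineDerivAt, map_add, map_smul] using hVξ (L y)
  · simpa only [HasLineDerivAt, map_add, map_smul] using hVξξ

lemma nonneg_of_isMaxOn {t₀ T : ℝ} (hV : HasParabolicDerivAt V ξ η z t ℓ)
    (ht : t ∈ Ioc t₀ T) (hmax : IsMaxOn (Function.uncurry V) (univ ×ˢ Icc t₀ T) (z, t)) :
    0 ≤ ℓ := by
  obtain ⟨Vt, Vη, Vξξ, Vξ, hVt, hVη, hVξ, hVξξ, rfl⟩ := hV
  have hspace (y : E) : V y t ≤ V z t :=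
    isMaxOn_iff.1 hmax (y, t) ⟨mem_univ y, ht.1.le, ht.2⟩
  have hline (v : E) : IsLocalMax (fun s : ℝ => V (z + s • v) t) 0 :=
    Eventually.of_forall fun s => by simpa using hspace (z + s • v)
  have hVt_nonneg : 0 ≤ Vt :=
    hasDerivAt_nonneg_of_forall_le_left hVt ht.1 fun s hs =>
      isMaxOn_iff.1 hmax (z, s) ⟨mem_univ z, hs.1, hs.2.trans ht.2⟩
  have hVη_zero : Vη = 0 := (hline η).hasDerivAt_eq_zero hVη
  have hξ (s : ℝ) : HasDerivAt (fun s : ℝ => V (z + s • ξ) t) (Vξ (z + s • ξ)) s := by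
    have h : HasDerivAt (fun r : ℝ => V (z + s • ξ + r • ξ) t) (Vξ (z + s • ξ)) (s - s) := by
      rw [sub_self]
      exact hVξ (z + s • ξ)
    simpa [add_assoc, ← add_smul] using h.comp_sub_const s s
  have hVξξ_nonpos : Vξξ ≤ 0 := second_deriv_nonpos_of_isLocalMax hξ hVξξ (hline ξ)
  linarith

end HasParabolicDerivAt

lemma hasParabolicDerivAt_of_hasDerivAt {w : ℝ → ℝ → ℝ} {wx : ℝ → ℝ} {x t wt wxx : ℝ} (ξ η : ℝ)
    (ht : HasDerivAt (w x) wt t) (hx : ∀ y, HasDerivAt (fun y => w y t) (wx y) y)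
    (hxx : HasDerivAt wx wxx x) :
    HasParabolicDerivAt w ξ η x t (wt - ξ ^ 2 * wxx + η * wx x) := by
  have hline {f : ℝ → ℝ} {f' y : ℝ} (hf : HasDerivAt f f' y) (v : ℝ) :
      HasLineDerivAt ℝ f (v * f') y v := by
    simpa using hf.hasFDerivAt.hasLineDerivAt v
  exact ⟨wt, η * wx x, ξ ^ 2 * wxx, fun y => ξ * wx y, ht, hline (hx x) η,
    fun y => hline (hx y) ξ, (hline (hxx.const_mul ξ) ξ).congr_deriv (by ring), rfl⟩

end Operator

section Penalty

variable {E : Type*} [NormedAddCommGroup E]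

/-- The function `e^{K (t - t₀)} (1 + ‖z‖²)`. For large `K` it is a strict supersolution, and small
multiples of it force the maximum of a bounded function over `E × [t₀, T]` to be attained. -/
noncomputable def growthPenalty (K t₀ : ℝ) (z : E) (t : ℝ) : ℝ :=
  Real.exp (K * (t - t₀)) * (1 + ‖z‖ ^ 2)

lemma growthPenalty_pos (K t₀ : ℝ) (z : E) (t : ℝ) : 0 < growthPenalty K t₀ z t := by
  unfold growthPenalty
  positivity

lemma continuous_growthPenalty (K t₀ : ℝ) :
    Continuous (Function.uncurry (growthPenalty K t₀ : E → ℝ → ℝ)) := by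
  unfold growthPenalty Function.uncurry
  fun_prop

lemma two_mul_norm_le_growthPenalty {K t₀ t : ℝ} (hK : 0 ≤ K) (ht : t₀ ≤ t) (z : E) :
    2 * ‖z‖ ≤ growthPenalty K t₀ z t :=
  calc 2 * ‖z‖ ≤ 1 + ‖z‖ ^ 2 := by linarith [two_mul_le_add_sq 1 ‖z‖]
    _ ≤ growthPenalty K t₀ z t := le_mul_of_one_le_left (by positivity)
        (Real.one_le_exp (mul_nonneg hK (sub_nonneg.2 ht)))

lemma hasParabolicDerivAt_growthPenalty [InnerProductSpace ℝ E] (K t₀ t : ℝ) (ξ η z : E) :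
    HasParabolicDerivAt (growthPenalty K t₀) ξ η z t (Real.exp (K * (t - t₀)) *
      (K * (1 + ‖z‖ ^ 2) - 2 * ‖ξ‖ ^ 2 + 2 * inner ℝ z η)) := by
  set e := Real.exp (K * (t - t₀))
  have htime : HasDerivAt (fun s => Real.exp (K * (s - t₀))) (e * K) t := by
    simpa using (((hasDerivAt_id t).sub_const t₀).const_mul K).exp
  have hspace (y v : E) :
      HasLineDerivAt ℝ (fun y : E => e * (1 + ‖y‖ ^ 2)) (e * (2 * inner ℝ y v)) y v := by
    have h := ((hasStrictFDerivAt_norm_sq y).hasFDerivAt.const_add 1).const_mul e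
    simpa using h.hasLineDerivAt v
  have hspace₂ :
      HasLineDerivAt ℝ (fun y => e * (2 * inner ℝ y ξ)) (e * (2 * ‖ξ‖ ^ 2)) z ξ := by
    have h : HasLineDerivAt ℝ (fun y => inner ℝ y ξ) (inner ℝ ξ ξ) z ξ := by
      simpa using ((hasFDerivAt_id (𝕜 := ℝ) z).inner ℝ (hasFDerivAt_const ξ z)).hasLineDerivAt ξ
    rw [← real_inner_self_eq_norm_sq]
    exact HasDerivAt.const_mul e (HasDerivAt.const_mul 2 h)
  exact ⟨_, _, _, _, htime.mul_const _, hspace z η, (hspace · ξ), hspace₂, by ring⟩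

lemma exists_isMaxOn_sub_growthPenalty [ProperSpace E] {V : E → ℝ → ℝ} {t₀ t₁ T K B δ : ℝ}
    {z₁ : E} (hV : ContinuousOn (Function.uncurry V) (univ ×ˢ Icc t₀ T))
    (hB : ∀ z, ∀ t ∈ Icc t₀ T, V z t ≤ B) (hK : 0 ≤ K) (hδ : 0 < δ) (ht₁ : t₁ ∈ Icc t₀ T)
    (hpos : 0 < V z₁ t₁ - δ * growthPenalty K t₀ z₁ t₁) :
    ∃ p ∈ (univ : Set E) ×ˢ Icc t₀ T,
      IsMaxOn (Function.uncurry fun z t => V z t - δ * growthPenalty K t₀ z t)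
        (univ ×ˢ Icc t₀ T) p := by
  refine ContinuousOn.exists_isMaxOn' (x₀ := (z₁, t₁)) ?_ (isClosed_univ.prod isClosed_Icc)
    ⟨mem_univ z₁, ht₁⟩ ?_
  · exact hV.sub (continuous_growthPenalty K t₀ |>.const_mul δ).continuousOn
  · have hcompact : IsCompact (Metric.closedBall (0 : E) (|B| / δ) ×ˢ Icc t₀ T) :=
      (isCompact_closedBall _ _).prod isCompact_Icc
    filter_upwards [mem_inf_of_left hcompact.compl_mem_cocompact,
      mem_inf_of_right (mem_principal_self _)] with p hfar hp
    obtain ⟨z, t⟩ := p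
    have ht : t ∈ Icc t₀ T := hp.2
    have hz : |B| < δ * ‖z‖ := by
      rw [← div_lt_iff₀' hδ]
      simpa [ht.1, ht.2] using hfar
    have hpenalty := mul_le_mul_of_nonneg_left (two_mul_norm_le_growthPenalty hK ht.1 z) hδ.le
    refine le_trans ?_ hpos.le
    change V z t - δ * growthPenalty K t₀ z t ≤ 0
    linarith [hB z t ht, le_abs_self B, abs_nonneg B]

theorem nonpos_of_parabolic_subsolution [InnerProductSpace ℝ E] [ProperSpace E]
    {V : E → ℝ → ℝ} {ξ η : E → ℝ → E} {t₀ T B S C : ℝ}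
    (hV : ContinuousOn (Function.uncurry V) (univ ×ˢ Icc t₀ T))
    (hB : ∀ z, ∀ t ∈ Icc t₀ T, V z t ≤ B) (hinit : ∀ z, V z t₀ ≤ 0)
    (hξ : ∀ z, ∀ t ∈ Ioc t₀ T, ‖ξ z t‖ ≤ S) (hη : ∀ z, ∀ t ∈ Ioc t₀ T, ‖η z t‖ ≤ C)
    (hsub : ∀ z, ∀ t ∈ Ioc t₀ T, ∃ ℓ ≤ 0, HasParabolicDerivAt V (ξ z t) (η z t) z t ℓ) :
    ∀ z, ∀ t ∈ Icc t₀ T, V z t ≤ 0 := by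
  intro z₁ t₁ ht₁
  by_contra! hpos
  have hpenalty := growthPenalty_pos (2 * S ^ 2 + |C| + 1) t₀ z₁ t₁
  set K := 2 * S ^ 2 + |C| + 1 with hK
  obtain ⟨δ, hδ, hδlt⟩ : ∃ δ > 0, δ * growthPenalty K t₀ z₁ t₁ < V z₁ t₁ := by
    refine ⟨V z₁ t₁ / (2 * growthPenalty K t₀ z₁ t₁), by positivity, ?_⟩
    field_simp
    linarith
  obtain ⟨⟨z, t⟩, ⟨-, ht⟩, hmax⟩ := exists_isMaxOn_sub_growthPenalty hV hB
    (by positivity : 0 ≤ K) hδ ht₁ (sub_pos.2 hδlt)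
  have hle : V z₁ t₁ - δ * growthPenalty K t₀ z₁ t₁ ≤ V z t - δ * growthPenalty K t₀ z t :=
    isMaxOn_iff.1 hmax (z₁, t₁) ⟨mem_univ z₁, ht₁⟩
  have htt : t₀ < t := by
    refine lt_of_le_of_ne ht.1 ?_
    rintro rfl
    linarith [hinit z, mul_pos hδ (growthPenalty_pos K t₀ z t₀)]
  obtain ⟨ℓ, hℓ, hVℓ⟩ := hsub z t ⟨htt, ht.2⟩
  have hnonneg := (hVℓ.sub ((hasParabolicDerivAt_growthPenalty K t₀ t (ξ z t) (η z t) z).const_mul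
    δ)).nonneg_of_isMaxOn ⟨htt, ht.2⟩ hmax
  have hstrict : 0 < K * (1 + ‖z‖ ^ 2) - 2 * ‖ξ z t‖ ^ 2 + 2 * inner ℝ z (η z t) := by
    have hξS : ‖ξ z t‖ ^ 2 ≤ S ^ 2 := by gcongr; exact hξ z t ⟨htt, ht.2⟩
    have hηC : |inner ℝ z (η z t)| ≤ ‖z‖ * |C| := (abs_real_inner_le_norm z (η z t)).trans
      (by gcongr; exact (hη z t ⟨htt, ht.2⟩).trans (le_abs_self C))
    have hz := mul_nonneg (abs_nonneg C) (sq_nonneg (‖z‖ - 1))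
    have hz' := mul_nonneg (sq_nonneg S) (sq_nonneg ‖z‖)
    rw [hK]
    linarith [neg_abs_le (inner ℝ z (η z t)), sq_nonneg ‖z‖]
  linarith [mul_pos hδ (mul_pos (Real.exp_pos (K * (t - t₀))) hstrict)]

end Penalty

end MaximumPrinciple

/-! ### A smoothed absolute value -/

section SmoothAbs

/-- The smoothed absolute value `r ↦ √(h² + r²)`. -/
noncomputable def sabs (h r : ℝ) : ℝ := √(h ^ 2 + r ^ 2)

lemma sabs_sq (h r : ℝ) : sabs h r ^ 2 = h ^ 2 + r ^ 2 := Real.sq_sqrt (by positivity)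

lemma sabs_zero_left (r : ℝ) : sabs 0 r = |r| := by simp [sabs, Real.sqrt_sq_eq_abs]

lemma sabs_zero_right {h : ℝ} (hh : 0 < h) : sabs h 0 = h := by simp [sabs, hh.le]

lemma sabs_pos {h : ℝ} (hh : 0 < h) (r : ℝ) : 0 < sabs h r := Real.sqrt_pos.2 (by positivity)

lemma le_sabs (h r : ℝ) : h ≤ sabs h r := Real.le_sqrt_of_sq_le (by linarith [sq_nonneg r])

lemma abs_le_sabs (h r : ℝ) : |r| ≤ sabs h r := Real.abs_le_sqrt (by linarith [sq_nonneg h])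

lemma continuous_sabs : Continuous (Function.uncurry sabs) := by
  unfold Function.uncurry sabs
  fun_prop

lemma hasDerivAt_sabs {h : ℝ} (hh : 0 < h) (r : ℝ) : HasDerivAt (sabs h) (r / sabs h r) r := by
  have hsq : HasDerivAt (fun r : ℝ => h ^ 2 + r ^ 2) (2 * r) r := by
    simpa using (hasDerivAt_pow 2 r).const_add (h ^ 2)
  refine (hsq.sqrt (by positivity)).congr_deriv ?_
  rw [sabs]
  field_simp

lemma hasDerivAt_div_sabs {h : ℝ} (hh : 0 < h) (r : ℝ) :
    HasDerivAt (fun r => r / sabs h r) (h ^ 2 / sabs h r ^ 3) r := by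
  have hpos := sabs_pos hh r
  refine ((hasDerivAt_id r).div (hasDerivAt_sabs hh r) hpos.ne').congr_deriv ?_
  simp only [id]
  field_simp
  linarith [sabs_sq h r]

lemma abs_div_sabs_le_one {h : ℝ} (hh : 0 < h) (r : ℝ) : |r / sabs h r| ≤ 1 := by
  rw [abs_div, abs_of_pos (sabs_pos hh r)]
  exact (div_le_one (sabs_pos hh r)).2 (abs_le_sabs h r)

lemma sq_div_sabs_cube_le {h : ℝ} (hh : 0 < h) (r : ℝ) : h ^ 2 / sabs h r ^ 3 ≤ 1 / h := by
  have hpos := sabs_pos hh r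
  have hcube : h ^ 3 ≤ sabs h r ^ 3 := by gcongr; exact le_sabs h r
  rw [div_le_div_iff₀ (by positivity) hh]
  linarith

lemma sq_mul_sq_div_sabs_cube_le {h : ℝ} (hh : 0 < h) (r : ℝ) :
    r ^ 2 * (h ^ 2 / sabs h r ^ 3) ≤ sabs h r := by
  have hpos := sabs_pos hh r
  rw [← mul_div_assoc, div_le_iff₀ (by positivity)]
  calc r ^ 2 * h ^ 2 ≤ (h ^ 2 + r ^ 2) ^ 2 := by nlinarith [sq_nonneg (h * r)]
    _ = sabs h r * sabs h r ^ 3 := by rw [← sabs_sq]; ring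

end SmoothAbs

/-! ### Bounded Lipschitz functions -/

section BoundedLipschitz

open Set NNReal

/-- `f` is bounded by `C` and Lipschitz continuous with constant `C`. -/
structure BoundedLipschitzWith {X V : Type*} [PseudoEMetricSpace X] [SeminormedAddCommGroup V]
    (C : ℝ≥0) (f : X → V) : Prop where
  norm_le : ∀ x, ‖f x‖ ≤ C
  lipschitz : LipschitzWith C f

namespace BoundedLipschitzWith

variable {X V W : Type*} [PseudoEMetricSpace X] [SeminormedAddCommGroup V]
  [SeminormedAddCommGroup W] {C D : ℝ≥0}

lemma mono {f : X → V} (hf : BoundedLipschitzWith C f) (hCD : C ≤ D) :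
    BoundedLipschitzWith D f :=
  ⟨fun x => (hf.norm_le x).trans (by exact_mod_cast hCD), hf.lipschitz.weaken hCD⟩

lemma prodMk {f : X → V} {g : X → W} (hf : BoundedLipschitzWith C f)
    (hg : BoundedLipschitzWith C g) : BoundedLipschitzWith C fun x => (f x, g x) :=
  ⟨fun x => max_le (hf.norm_le x) (hg.norm_le x), by simpa using hf.lipschitz.prodMk hg.lipschitz⟩

lemma abs_sub_le {f : ℝ → ℝ} (hf : BoundedLipschitzWith C f) (x x' : ℝ) :
    |f x - f x'| ≤ C * |x - x'| := by
  simpa only [Real.dist_eq] using hf.lipschitz.dist_le_mul x x'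

end BoundedLipschitzWith

lemma exists_boundedLipschitzWith_comp {X V W : Type*} [PseudoEMetricSpace X]
    [SeminormedAddCommGroup V] [SeminormedAddCommGroup W] {g : V → W} {K : Set V}
    (hK : IsCompact K) (hg : LocallyLipschitzOn K g) (D : ℝ≥0) :
    ∃ C : ℝ≥0, ∀ f : X → V, BoundedLipschitzWith D f → MapsTo f univ K →
      BoundedLipschitzWith C (g ∘ f) := by
  obtain ⟨L, hL⟩ := hg.exists_lipschitzOnWith_of_compact hK
  obtain ⟨B, hB⟩ := hK.exists_bound_of_continuousOn hL.continuousOn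
  refine ⟨max B.toNNReal (L * D), fun f hf hfK => ⟨fun x => ?_, ?_⟩⟩
  · exact (hB _ (hfK (mem_univ x))).trans ((Real.le_coe_toNNReal B).trans (by simp))
  · exact (lipschitzOnWith_univ.1 (hL.comp hf.lipschitz.lipschitzOnWith hfK)).weaken
      (le_max_right _ _)

end BoundedLipschitz

/-! ### A priori estimates for a linear parabolic equation -/

section AprioriEstimates

open Set Filter Topology NNReal

/-- `w` is a bounded continuous function on `ℝ × [0, T]` solving `w_t - σ² w_xx + β w_x = F` on
`ℝ × (0, T]`. The diffusion coefficient enters through its square root, whose Lipschitz continuity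
is what the doubling of variables uses. -/
structure IsBoundedSolution (T : ℝ) (σ β F w : ℝ → ℝ → ℝ) : Prop where
  continuousOn : ContinuousOn (Function.uncurry w) (univ ×ˢ Icc 0 T)
  bounded : ∃ B, ∀ x, ∀ t ∈ Icc 0 T, |w x t| ≤ B
  eqn : ∀ x, ∀ t ∈ Ioc 0 T, HasParabolicDerivAt w (σ x t) (β x t) x t (F x t)

variable {σ β F w : ℝ → ℝ → ℝ} {T S U : ℝ} {C L₀ : ℝ≥0}

lemma IsBoundedSolution.neg (hw : IsBoundedSolution T σ β F w) :
    IsBoundedSolution T σ β (fun x t => -F x t) (fun x t => -w x t) where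
  continuousOn := hw.continuousOn.neg
  bounded := by simpa only [abs_neg] using hw.bounded
  eqn x t ht := (hw.eqn x t ht).neg

lemma hasParabolicDerivAt_sabs_sub {Λ κ : ℝ → ℝ} {κ' Λ' h t : ℝ} (hh : 0 < h) (x₀ x ξ η : ℝ)
    (hκ : HasDerivAt κ κ' t) (hΛ : HasDerivAt Λ Λ' t) :
    HasParabolicDerivAt (fun x t => κ t + Λ t * sabs h (x - x₀)) ξ η x t
      (κ' + Λ' * sabs h (x - x₀) - ξ ^ 2 * (Λ t * (h ^ 2 / sabs h (x - x₀) ^ 3))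
        + η * (Λ t * ((x - x₀) / sabs h (x - x₀)))) :=
  hasParabolicDerivAt_of_hasDerivAt (wx := fun y => Λ t * ((y - x₀) / sabs h (y - x₀))) ξ η
    (hκ.add (hΛ.mul_const _))
    (fun y => (((hasDerivAt_sabs hh (y - x₀)).comp_sub_const y x₀).const_mul _).const_add _)
    (((hasDerivAt_div_sabs hh (x - x₀)).comp_sub_const x x₀).const_mul _)

lemma sabs_operator_le {h L ξ η S C : ℝ} (hh : 0 < h) (r : ℝ) (hL : 0 ≤ L) (hξ : |ξ| ≤ S)
    (hη : |η| ≤ C) :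
    ξ ^ 2 * (L * (h ^ 2 / sabs h r ^ 3)) - η * (L * (r / sabs h r)) ≤ S ^ 2 * (L / h) + C * L := by
  have hsecond : ξ ^ 2 * (L * (h ^ 2 / sabs h r ^ 3)) ≤ S ^ 2 * (L / h) :=
    calc ξ ^ 2 * (L * (h ^ 2 / sabs h r ^ 3)) ≤ S ^ 2 * (L * (1 / h)) :=
          mul_le_mul (sq_le_sq' (abs_le.1 hξ).1 (abs_le.1 hξ).2)
            (mul_le_mul_of_nonneg_left (sq_div_sabs_cube_le hh r) hL)
            (mul_nonneg hL (div_nonneg (sq_nonneg h) (pow_nonneg (sabs_pos hh r).le 3)))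
            (sq_nonneg S)
      _ = S ^ 2 * (L / h) := by rw [mul_one_div]
  have hfirst : |η * (L * (r / sabs h r))| ≤ C * (L * 1) := by
    rw [abs_mul, abs_mul, abs_of_nonneg hL]
    have hC : 0 ≤ C := (abs_nonneg η).trans hη
    gcongr
    exact abs_div_sabs_le_one hh r
  linarith [neg_le_of_abs_le hfirst]

lemma IsBoundedSolution.le_barrier (hw : IsBoundedSolution T σ β F w)
    (hS : ∀ x, ∀ t ∈ Ioc 0 T, |σ x t| ≤ S) (hβ : ∀ x, ∀ t ∈ Ioc 0 T, |β x t| ≤ C)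
    (hF : ∀ x, ∀ t ∈ Ioc 0 T, |F x t| ≤ C) {t₀ x₀ h L : ℝ} (ht₀ : 0 ≤ t₀) (hh : 0 < h)
    (hL : 0 ≤ L) (hinit : ∀ x, w x t₀ ≤ U + L * sabs h (x - x₀)) :
    ∀ x, ∀ t ∈ Icc t₀ T,
      w x t ≤ U + L * sabs h (x - x₀) + (S ^ 2 * (L / h) + C * L + C) * (t - t₀) := by
  set k := S ^ 2 * (L / h) + C * L + C
  have hwin : Icc t₀ T ⊆ Icc 0 T := Icc_subset_Icc_left ht₀
  have hwin' : Ioc t₀ T ⊆ Ioc 0 T := Ioc_subset_Ioc_left ht₀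
  have hsabs : Continuous fun p : ℝ × ℝ => sabs h (p.1 - x₀) :=
    continuous_sabs.comp (by fun_prop : Continuous fun p : ℝ × ℝ => (h, p.1 - x₀))
  obtain ⟨B, hB⟩ := hw.bounded
  have hV (x : ℝ) (t : ℝ) (ht : t ∈ Icc t₀ T) :
      w x t - (U + k * (t - t₀) + L * sabs h (x - x₀)) ≤ 0 := by
    refine nonpos_of_parabolic_subsolution (S := S) (C := C) (B := B - U) (ξ := σ) (η := β)
      (V := fun x t => w x t - (U + k * (t - t₀) + L * sabs h (x - x₀)))
      ?_ (fun y s hs => ?_) (fun y => ?_) (fun y s hs => hS y s (hwin' hs))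
      (fun y s hs => hβ y s (hwin' hs)) (fun y s hs => ?_) x t ht
    · exact (hw.continuousOn.mono (prod_mono_right hwin)).sub
        (Continuous.continuousOn (by fun_prop))
    · have hk_nonneg : 0 ≤ k := by positivity
      have hs_nonneg := mul_nonneg hk_nonneg (sub_nonneg.2 hs.1)
      have hsabs_nonneg := mul_nonneg hL (sabs_pos hh (y - x₀)).le
      linarith [le_of_abs_le (hB y s (hwin hs))]
    · linarith [hinit y]
    · have hκ : HasDerivAt (fun t => U + k * (t - t₀)) k s := by
        simpa using (((hasDerivAt_id s).sub_const t₀).const_mul k).const_add U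
      refine ⟨_, ?_, (hw.eqn y s (hwin' hs)).sub
        (hasParabolicDerivAt_sabs_sub hh x₀ y (σ y s) (β y s) hκ (hasDerivAt_const s L))⟩
      have hop := sabs_operator_le hh (y - x₀) hL (hS y s (hwin' hs)) (hβ y s (hwin' hs))
      linarith [le_of_abs_le (hF y s (hwin' hs))]
  intro x t ht
  linarith [hV x t ht]

lemma IsBoundedSolution.abs_le (hw : IsBoundedSolution T σ β F w)
    (hS : ∀ x, ∀ t ∈ Ioc 0 T, |σ x t| ≤ S) (hβ : ∀ x, ∀ t ∈ Ioc 0 T, |β x t| ≤ C)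
    (hF : ∀ x, ∀ t ∈ Ioc 0 T, |F x t| ≤ C) (hinit : ∀ x, |w x 0| ≤ U) :
    ∀ x, ∀ t ∈ Icc 0 T, |w x t| ≤ U + C * t := by
  intro x t ht
  have upper {F w : ℝ → ℝ → ℝ} (hw : IsBoundedSolution T σ β F w)
      (hF : ∀ x, ∀ t ∈ Ioc 0 T, |F x t| ≤ C) (hinit : ∀ x, |w x 0| ≤ U) : w x t ≤ U + C * t := by
    simpa using hw.le_barrier hS hβ hF (x₀ := 0) le_rfl one_pos le_rfl
      (fun x => by simpa using le_of_abs_le (hinit x)) x t ht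
  refine _root_.abs_le'.2 ⟨upper hw hF hinit, upper hw.neg ?_ ?_⟩
  · simpa only [abs_neg] using hF
  · simpa only [abs_neg] using hinit

lemma IsBoundedSolution.le_add_sqrt (hw : IsBoundedSolution T σ β F w)
    (hS : ∀ x, ∀ t ∈ Ioc 0 T, |σ x t| ≤ S) (hβ : ∀ x, ∀ t ∈ Ioc 0 T, |β x t| ≤ C)
    (hF : ∀ x, ∀ t ∈ Ioc 0 T, |F x t| ≤ C) {L t₀ t : ℝ} (hL : 0 ≤ L) (ht₀ : 0 ≤ t₀)
    (htt : t₀ ≤ t) (htT : t ≤ T) (hlip : ∀ x x', |w x t₀ - w x' t₀| ≤ L * |x - x'|) (x : ℝ) :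
    w x t - w x t₀ ≤ L * (1 + S ^ 2) * √(t - t₀) + C * (L + 1) * (t - t₀) := by
  obtain rfl | hlt := htt.eq_or_lt
  · simp
  have hh : 0 < √(t - t₀) := Real.sqrt_pos.2 (sub_pos.2 hlt)
  have hbarrier := hw.le_barrier hS hβ hF (U := w x t₀) (x₀ := x) ht₀ hh hL
    (fun y => by
      have hy := mul_le_mul_of_nonneg_left (abs_le_sabs √(t - t₀) (y - x)) hL
      linarith [le_of_abs_le (hlip y x)]) x t ⟨htt, htT⟩
  have hsq : √(t - t₀) * √(t - t₀) = t - t₀ := Real.mul_self_sqrt (sub_nonneg.2 htt)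
  have hdiv : L / √(t - t₀) * (t - t₀) = L * √(t - t₀) := by
    rw [div_mul_eq_mul_div, mul_div_assoc, Real.div_sqrt]
  rw [sub_self, sabs_zero_right hh] at hbarrier
  linear_combination hbarrier + S ^ 2 * hdiv

/-- A bound for the Lipschitz constant at time `t` of a solution with initial Lipschitz constant
`L₀` and coefficients controlled by `C`: it satisfies `Λ' ≥ C + (C² + C) Λ` and `Λ 0 = L₀`. -/
noncomputable def lipschitzGrowth (C L₀ t : ℝ) : ℝ := (L₀ + C * t) * Real.exp ((C ^ 2 + C) * t)

lemma lipschitzGrowth_nonneg {C L₀ t : ℝ} (hC : 0 ≤ C) (hL₀ : 0 ≤ L₀) (ht : 0 ≤ t) :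
    0 ≤ lipschitzGrowth C L₀ t := by
  unfold lipschitzGrowth
  positivity

lemma lipschitzGrowth_zero (C L₀ : ℝ) : lipschitzGrowth C L₀ 0 = L₀ := by simp [lipschitzGrowth]

lemma continuous_lipschitzGrowth (C L₀ : ℝ) : Continuous (lipschitzGrowth C L₀) := by
  unfold lipschitzGrowth
  fun_prop

lemma monotoneOn_lipschitzGrowth {C L₀ : ℝ} (hC : 0 ≤ C) (hL₀ : 0 ≤ L₀) :
    MonotoneOn (lipschitzGrowth C L₀) (Ici 0) := by
  intro s _ t ht hst
  have ht : 0 ≤ t := ht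
  unfold lipschitzGrowth
  gcongr

lemma exists_hasDerivAt_lipschitzGrowth {C L₀ t : ℝ} (hC : 0 ≤ C) (ht : 0 ≤ t) :
    ∃ Λ', C + (C ^ 2 + C) * lipschitzGrowth C L₀ t ≤ Λ' ∧
      HasDerivAt (lipschitzGrowth C L₀) Λ' t := by
  have hlin : HasDerivAt (fun t => L₀ + C * t) C t := by
    simpa using ((hasDerivAt_id t).const_mul C).const_add L₀
  have hexp : HasDerivAt (fun t => Real.exp ((C ^ 2 + C) * t))
      (Real.exp ((C ^ 2 + C) * t) * (C ^ 2 + C)) t := by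
    simpa using ((hasDerivAt_id t).const_mul (C ^ 2 + C)).exp
  refine ⟨_, ?_, hlin.mul hexp⟩
  have hone : C * 1 ≤ C * Real.exp ((C ^ 2 + C) * t) :=
    mul_le_mul_of_nonneg_left (Real.one_le_exp (by positivity)) hC
  unfold lipschitzGrowth
  linarith

lemma HasParabolicDerivAt.doubling {v w : ℝ → ℝ → ℝ} {ξ η z : WithLp 2 (ℝ × ℝ)} {t ℓ m : ℝ}
    (hv : HasParabolicDerivAt v ξ.fst η.fst z.fst t ℓ)
    (hw : HasParabolicDerivAt w ξ.snd η.snd z.snd t m) :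
    HasParabolicDerivAt (fun (z : WithLp 2 (ℝ × ℝ)) t => v z.fst t - w z.snd t) ξ η z t (ℓ - m) :=
  (hv.comp_linearMap (WithLp.fstₗ 2 ℝ ℝ ℝ)).sub (hw.comp_linearMap (WithLp.sndₗ 2 ℝ ℝ ℝ))

lemma hasParabolicDerivAt_mul_sabs_fst_sub_snd {Λ : ℝ → ℝ} {Λ' h t : ℝ} (hh : 0 < h)
    (ξ η z : WithLp 2 (ℝ × ℝ)) (hΛ : HasDerivAt Λ Λ' t) :
    HasParabolicDerivAt (fun (z : WithLp 2 (ℝ × ℝ)) t => Λ t * sabs h (z.fst - z.snd)) ξ η z t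
      (Λ' * sabs h (z.fst - z.snd)
        - (ξ.fst - ξ.snd) ^ 2 * (Λ t * (h ^ 2 / sabs h (z.fst - z.snd) ^ 3))
        + (η.fst - η.snd) * (Λ t * ((z.fst - z.snd) / sabs h (z.fst - z.snd)))) := by
  have hdiff := hasParabolicDerivAt_sabs_sub hh 0 (z.fst - z.snd) (ξ.fst - ξ.snd) (η.fst - η.snd)
    (hasDerivAt_const t 0) hΛ
  simpa using hdiff.comp_linearMap (WithLp.fstₗ 2 ℝ ℝ ℝ - WithLp.sndₗ 2 ℝ ℝ ℝ)

lemma norm_toLp_prod_le (a b : ℝ) : ‖WithLp.toLp 2 (a, b)‖ ≤ |a| + |b| := by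
  rw [WithLp.prod_norm_eq_of_L2, Real.sqrt_le_left (by positivity)]
  simp only [WithLp.toLp_fst, WithLp.toLp_snd, Real.norm_eq_abs]
  nlinarith [abs_nonneg a, abs_nonneg b]

lemma sub_le_sabs_doubling_operator {Λ Λ' ξ ξ' η η' F F' h r : ℝ} (hh : 0 < h) (hΛ : 0 ≤ Λ)
    (hΛ' : C + (C ^ 2 + C) * Λ ≤ Λ') (hξ : |ξ - ξ'| ≤ C * |r|) (hη : |η - η'| ≤ C * |r|)
    (hF : |F - F'| ≤ C * |r|) :
    F - F' ≤ Λ' * sabs h r - (ξ - ξ') ^ 2 * (Λ * (h ^ 2 / sabs h r ^ 3))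
      + (η - η') * (Λ * (r / sabs h r)) := by
  have hpos := sabs_pos hh r
  have hr := abs_le_sabs h r
  have hsecond : (ξ - ξ') ^ 2 * (Λ * (h ^ 2 / sabs h r ^ 3)) ≤ C ^ 2 * Λ * sabs h r :=
    calc (ξ - ξ') ^ 2 * (Λ * (h ^ 2 / sabs h r ^ 3))
        ≤ (C ^ 2 * r ^ 2) * (Λ * (h ^ 2 / sabs h r ^ 3)) := by
          gcongr
          rw [← sq_abs, ← sq_abs r, ← mul_pow]
          gcongr
      _ = C ^ 2 * Λ * (r ^ 2 * (h ^ 2 / sabs h r ^ 3)) := by ring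
      _ ≤ C ^ 2 * Λ * sabs h r := by gcongr; exact sq_mul_sq_div_sabs_cube_le hh r
  have hfirst : |(η - η') * (Λ * (r / sabs h r))| ≤ C * sabs h r * (Λ * 1) := by
    rw [abs_mul, abs_mul, abs_of_nonneg hΛ]
    gcongr
    · exact hη.trans (by gcongr)
    · exact abs_div_sabs_le_one hh r
  have hsource : F - F' ≤ C * sabs h r := (le_of_abs_le hF).trans (by gcongr)
  have hgrowth := mul_le_mul_of_nonneg_right hΛ' hpos.le
  linarith [neg_le_of_abs_le hfirst]

lemma IsBoundedSolution.continuousOn_doubling (hw : IsBoundedSolution T σ β F w) {Λ : ℝ → ℝ}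
    (hΛ : Continuous Λ) (h : ℝ) :
    ContinuousOn (Function.uncurry fun (z : WithLp 2 (ℝ × ℝ)) t =>
      w z.fst t - w z.snd t - Λ t * sabs h (z.fst - z.snd)) (univ ×ˢ Icc 0 T) := by
  have hproj (f : WithLp 2 (ℝ × ℝ) →ₗ[ℝ] ℝ) :
      ContinuousOn (fun p : WithLp 2 (ℝ × ℝ) × ℝ => w (f p.1) p.2) (univ ×ˢ Icc 0 T) :=
    hw.continuousOn.comp (f := fun p : WithLp 2 (ℝ × ℝ) × ℝ => (f p.1, p.2))
      (by fun_prop) fun p hp => ⟨mem_univ _, hp.2⟩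
  have hsabs : Continuous fun p : WithLp 2 (ℝ × ℝ) × ℝ => sabs h (p.1.fst - p.1.snd) :=
    continuous_sabs.comp (by fun_prop : Continuous fun p : WithLp 2 (ℝ × ℝ) × ℝ =>
      (h, p.1.fst - p.1.snd))
  exact ((hproj (WithLp.fstₗ 2 ℝ ℝ ℝ)).sub (hproj (WithLp.sndₗ 2 ℝ ℝ ℝ))).sub
    ((hΛ.comp continuous_snd).mul hsabs).continuousOn

lemma IsBoundedSolution.sub_le_mul_sabs (hw : IsBoundedSolution T σ β F w)
    (hσ : ∀ t ∈ Ioc 0 T, BoundedLipschitzWith C (σ · t))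
    (hβ : ∀ t ∈ Ioc 0 T, BoundedLipschitzWith C (β · t))
    (hF : ∀ t ∈ Ioc 0 T, BoundedLipschitzWith C (F · t)) (hinit : LipschitzWith L₀ (w · 0))
    {h : ℝ} (hh : 0 < h) (x x' : ℝ) {t : ℝ} (ht : t ∈ Icc 0 T) :
    w x t - w x' t ≤ lipschitzGrowth C L₀ t * sabs h (x - x') := by
  let Λ := lipschitzGrowth C L₀
  let V (z : WithLp 2 (ℝ × ℝ)) (t : ℝ) : ℝ := w z.fst t - w z.snd t - Λ t * sabs h (z.fst - z.snd)
  have hΛ_nonneg (s : ℝ) (hs : 0 ≤ s) : 0 ≤ Λ s := lipschitzGrowth_nonneg C.2 L₀.2 hs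
  have hbdd {s a b : ℝ} {f : ℝ → ℝ → ℝ} (hf : BoundedLipschitzWith C (f · s)) :
      ‖WithLp.toLp 2 (f a s, f b s)‖ ≤ C + C :=
    (norm_toLp_prod_le _ _).trans (add_le_add (hf.norm_le a) (hf.norm_le b))
  obtain ⟨B, hB⟩ := hw.bounded
  suffices hV : ∀ z, ∀ t ∈ Icc 0 T, V z t ≤ 0 from
    sub_nonpos.1 (hV (WithLp.toLp 2 (x, x')) t ht)
  refine nonpos_of_parabolic_subsolution (S := C + C) (C := C + C) (B := B + B)
    (ξ := fun z t => WithLp.toLp 2 (σ z.fst t, σ z.snd t))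
    (η := fun z t => WithLp.toLp 2 (β z.fst t, β z.snd t)) ?_ (fun z s hs => ?_) (fun z => ?_)
    (fun z s hs => hbdd (hσ s hs)) (fun z s hs => hbdd (hβ s hs)) (fun z s hs => ?_)
  · exact hw.continuousOn_doubling (continuous_lipschitzGrowth C L₀) h
  · have hsabs := mul_nonneg (hΛ_nonneg s hs.1) (sabs_pos hh (z.fst - z.snd)).le
    have hfst := le_of_abs_le (hB z.fst s hs)
    have hsnd := neg_le_of_abs_le (hB z.snd s hs)
    linarith
  · have hz := le_of_abs_le (hinit.dist_le_mul z.fst z.snd)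
    have hsabs := mul_le_mul_of_nonneg_left (abs_le_sabs h (z.fst - z.snd)) L₀.coe_nonneg
    simp only [V, Λ, lipschitzGrowth_zero]
    exact sub_nonpos.2 (hz.trans hsabs)
  · obtain ⟨Λ', hΛ', hderiv⟩ := exists_hasDerivAt_lipschitzGrowth (L₀ := L₀) C.2 hs.1.le
    refine ⟨_, sub_nonpos.2 (sub_le_sabs_doubling_operator hh (hΛ_nonneg s hs.1.le) hΛ'
      ((hσ s hs).abs_sub_le z.fst z.snd) ((hβ s hs).abs_sub_le z.fst z.snd)
      ((hF s hs).abs_sub_le z.fst z.snd)), ?_⟩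
    exact ((hw.eqn z.fst s hs).doubling (hw.eqn z.snd s hs)).sub
      (hasParabolicDerivAt_mul_sabs_fst_sub_snd hh _ _ z hderiv)

lemma IsBoundedSolution.abs_sub_le_lipschitzGrowth_mul (hw : IsBoundedSolution T σ β F w)
    (hσ : ∀ t ∈ Ioc 0 T, BoundedLipschitzWith C (σ · t))
    (hβ : ∀ t ∈ Ioc 0 T, BoundedLipschitzWith C (β · t))
    (hF : ∀ t ∈ Ioc 0 T, BoundedLipschitzWith C (F · t)) (hinit : LipschitzWith L₀ (w · 0))
    (x x' : ℝ) {t : ℝ} (ht : t ∈ Icc 0 T) :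
    |w x t - w x' t| ≤ lipschitzGrowth C L₀ t * |x - x'| := by
  have key (x x' : ℝ) : w x t - w x' t ≤ lipschitzGrowth C L₀ t * |x - x'| := by
    rw [← sabs_zero_left]
    have hlim : Tendsto (fun h => lipschitzGrowth C L₀ t * sabs h (x - x')) (𝓝[>] 0)
        (𝓝 (lipschitzGrowth C L₀ t * sabs 0 (x - x'))) := by
      have hcont : Continuous fun h => sabs h (x - x') := continuous_sabs.comp (by fun_prop :
        Continuous fun h : ℝ => (h, x - x'))
      exact (hcont.const_mul _).continuousWithinAt
    exact ge_of_tendsto hlim (eventually_mem_nhdsWithin.mono fun h hh =>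
      hw.sub_le_mul_sabs hσ hβ hF hinit hh x x' ht)
  refine abs_sub_le_iff.2 ⟨key x x', ?_⟩
  rw [abs_sub_comm]
  exact key x' x

lemma IsBoundedSolution.abs_sub_le_mul_sqrt (hw : IsBoundedSolution T σ β F w)
    (hS : ∀ x, ∀ t ∈ Ioc 0 T, |σ x t| ≤ S) (hβ : ∀ x, ∀ t ∈ Ioc 0 T, |β x t| ≤ C)
    (hF : ∀ x, ∀ t ∈ Ioc 0 T, |F x t| ≤ C) {L : ℝ} (hL : 0 ≤ L)
    (hlip : ∀ x x', ∀ t ∈ Icc 0 T, |w x t - w x' t| ≤ L * |x - x'|) (x : ℝ) {t t' : ℝ}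
    (ht : t ∈ Icc 0 T) (ht' : t' ∈ Icc 0 T) :
    |w x t - w x t'| ≤ (L * (1 + S ^ 2) + C * (L + 1) * √T) * √|t - t'| := by
  wlog htt : t' ≤ t generalizing t t'
  · rw [abs_sub_comm, abs_sub_comm t]
    exact this ht' ht (le_of_not_ge htt)
  have hbound : |w x t - w x t'| ≤
      L * (1 + S ^ 2) * √(t - t') + C * (L + 1) * (t - t') := by
    refine _root_.abs_le'.2 ⟨hw.le_add_sqrt hS hβ hF hL ht'.1 htt ht.2 (hlip · · t' ht') x, ?_⟩
    have hneg := hw.neg.le_add_sqrt hS hβ (by simpa only [abs_neg] using hF) hL ht'.1 htt ht.2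
      (fun x x' => by simpa only [neg_sub_neg, abs_sub_comm] using hlip x x' t' ht') x
    linarith
  have hsqrt : t - t' ≤ √T * √(t - t') := by
    have hmono : √(t - t') ≤ √T := Real.sqrt_le_sqrt (by linarith [ht.2, ht'.1])
    calc t - t' = √(t - t') * √(t - t') := (Real.mul_self_sqrt (sub_nonneg.2 htt)).symm
      _ ≤ √T * √(t - t') := by gcongr
  rw [abs_of_nonneg (sub_nonneg.2 htt)]
  have hC : 0 ≤ C * (L + 1) := by positivity
  linarith [mul_le_mul_of_nonneg_left hsqrt hC]

lemma abs_sub_add_sqrt_abs_sub_pos {x x' t t' : ℝ} (hne : ¬(x = x' ∧ t = t')) :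
    0 < |x - x'| + √|t - t'| := by
  by_cases hx : x = x'
  · have htt : t ≠ t' := fun h => hne ⟨hx, h⟩
    exact add_pos_of_nonneg_of_pos (abs_nonneg _) (Real.sqrt_pos.2 (abs_pos.2 (sub_ne_zero.2 htt)))
  · exact add_pos_of_pos_of_nonneg (abs_pos.2 (sub_ne_zero.2 hx)) (Real.sqrt_nonneg _)

lemma norm11_le {u : ℝ → ℝ → ℝ} {U H : ℝ} (hT : 0 ≤ T)
    (hU : ∀ x, ∀ t ∈ Icc 0 T, |u x t| ≤ U)
    (hspace : ∀ x x', ∀ t ∈ Icc 0 T, |u x t - u x' t| ≤ H * |x - x'|)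
    (htime : ∀ x, ∀ t ∈ Icc 0 T, ∀ t' ∈ Icc 0 T, |u x t - u x t'| ≤ H * √|t - t'|) :
    norm11 T u ≤ U + H := by
  refine add_le_add (csSup_le ⟨_, 0, 0, le_rfl, hT, rfl⟩ ?_)
    (csSup_le ⟨_, 0, 0, 1, 0, le_rfl, hT, le_rfl, hT, by simp, rfl⟩ ?_)
  · rintro _ ⟨x, t, ht, htT, rfl⟩
    exact hU x t ⟨ht, htT⟩
  · rintro _ ⟨x, t, x', t', ht, htT, ht', htT', hne, rfl⟩
    rw [← Real.sqrt_eq_rpow, div_le_iff₀ (abs_sub_add_sqrt_abs_sub_pos hne), mul_add]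
    exact (abs_sub_le _ (u x' t) _).trans (add_le_add (hspace x x' t ⟨ht, htT⟩)
      (htime x' t ⟨ht, htT⟩ t' ⟨ht', htT'⟩))

lemma IsBoundedSolution.norm11_le (hT : 0 ≤ T) (hw : IsBoundedSolution T σ β F w)
    (hS : ∀ x, ∀ t ∈ Ioc 0 T, |σ x t| ≤ S)
    (hσ : ∀ t ∈ Ioc 0 T, BoundedLipschitzWith C (σ · t))
    (hβ : ∀ t ∈ Ioc 0 T, BoundedLipschitzWith C (β · t))
    (hF : ∀ t ∈ Ioc 0 T, BoundedLipschitzWith C (F · t))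
    (hinit : BoundedLipschitzWith L₀ (w · 0)) :
    norm11 T w ≤ L₀ + C * T + (lipschitzGrowth C L₀ T * (1 + S ^ 2)
      + C * (lipschitzGrowth C L₀ T + 1) * √T) := by
  have hβC (x t : ℝ) (ht : t ∈ Ioc 0 T) : |β x t| ≤ C := (hβ t ht).norm_le x
  have hFC (x t : ℝ) (ht : t ∈ Ioc 0 T) : |F x t| ≤ C := (hF t ht).norm_le x
  set L := lipschitzGrowth C L₀ T
  have hL : 0 ≤ L := lipschitzGrowth_nonneg C.2 L₀.2 hT
  have hlip (x x' t : ℝ) (ht : t ∈ Icc 0 T) : |w x t - w x' t| ≤ L * |x - x'| :=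
    (hw.abs_sub_le_lipschitzGrowth_mul hσ hβ hF hinit.lipschitz x x' ht).trans
      (by gcongr; exact monotoneOn_lipschitzGrowth C.2 L₀.2 ht.1 hT ht.2)
  refine _root_.norm11_le hT (fun x t ht => ?_) (fun x x' t ht => ?_)
    fun x t ht t' ht' => hw.abs_sub_le_mul_sqrt hS hβC hFC hL hlip x ht ht'
  · exact (hw.abs_le hS hβC hFC hinit.norm_le x t ht).trans (by gcongr; exact ht.2)
  · refine (hlip x x' t ht).trans (mul_le_mul_of_nonneg_right ?_ (abs_nonneg _))
    have hsq : 0 ≤ L * S ^ 2 := by positivity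
    have htail : 0 ≤ C * (L + 1) * √T := by positivity
    linarith

lemma eventually_forall_norm11_le {M : ℝ} (hM : L₀ + L₀ * (1 + S ^ 2) < M) (C : ℝ≥0) :
    ∀ᶠ T : ℝ in 𝓝[>] 0, ∀ σ β F w : ℝ → ℝ → ℝ, IsBoundedSolution T σ β F w →
      (∀ x, ∀ t ∈ Ioc 0 T, |σ x t| ≤ S) →
      (∀ t ∈ Ioc 0 T, BoundedLipschitzWith C (σ · t)) →
      (∀ t ∈ Ioc 0 T, BoundedLipschitzWith C (β · t)) →
      (∀ t ∈ Ioc 0 T, BoundedLipschitzWith C (F · t)) →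
      BoundedLipschitzWith L₀ (w · 0) → norm11 T w ≤ M := by
  let bound (T : ℝ) : ℝ := L₀ + C * T + (lipschitzGrowth C L₀ T * (1 + S ^ 2)
    + C * (lipschitzGrowth C L₀ T + 1) * √T)
  have hcont : Continuous bound := by
    have := continuous_lipschitzGrowth C L₀
    fun_prop
  have hzero : bound 0 < M := by simpa [bound, lipschitzGrowth_zero] using hM
  filter_upwards [(hcont.tendsto 0).eventually_lt_const hzero |>.filter_mono nhdsWithin_le_nhds,
    self_mem_nhdsWithin] with T hTM hT σ β F w hw hS hσ hβ hF hinit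
  exact (hw.norm11_le (le_of_lt hT) hS hσ hβ hF hinit).trans hTM.le

end AprioriEstimates

/-! ### The classes `C^{1,1/2}` and `C^{2,1}` on a time strip -/

section FunctionClasses

open Set Filter Topology NNReal

variable {T : ℝ} {u w : ℝ → ℝ → ℝ}

lemma HolderClass.exists_bound (hu : HolderClass {p : ℝ × ℝ | 0 ≤ p.2 ∧ p.2 ≤ T} 1 u) :
    ∃ C, (∀ x, ∀ t ∈ Icc 0 T, |u x t| ≤ C) ∧
      ∀ x x', ∀ t ∈ Icc 0 T, ∀ t' ∈ Icc 0 T, |u x t - u x' t'| ≤ C * (|x - x'| + √|t - t'|) := by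
  obtain ⟨C, hbound, hholder⟩ := hu
  refine ⟨C, fun x t ht => hbound (x, t) ht, fun x x' t ht t' ht' => ?_⟩
  simpa only [Real.rpow_one, Real.sqrt_eq_rpow] using hholder (x, t) ht (x', t') ht'

lemma HolderClass.continuousOn (hu : HolderClass {p : ℝ × ℝ | 0 ≤ p.2 ∧ p.2 ≤ T} 1 u) :
    ContinuousOn (Function.uncurry u) (univ ×ˢ Icc 0 T) := by
  obtain ⟨C, -, hC⟩ := hu.exists_bound
  intro p hp
  have hlim : Tendsto (fun q : ℝ × ℝ => C * (|q.1 - p.1| + √|q.2 - p.2|))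
      (𝓝[univ ×ˢ Icc 0 T] p) (𝓝 0) := by
    refine Tendsto.mono_left ?_ nhdsWithin_le_nhds
    simpa using (by fun_prop : Continuous fun q : ℝ × ℝ =>
      C * (|q.1 - p.1| + √|q.2 - p.2|)).tendsto p
  rw [ContinuousWithinAt, tendsto_iff_dist_tendsto_zero]
  refine squeeze_zero' (Eventually.of_forall fun _ => dist_nonneg) ?_ hlim
  filter_upwards [self_mem_nhdsWithin] with q hq using hC q.1 p.1 q.2 hq.2 p.2 hp.2

lemma HolderClass.abs_add_div_le_norm11 (hu : HolderClass {p : ℝ × ℝ | 0 ≤ p.2 ∧ p.2 ≤ T} 1 u)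
    (y : ℝ) {s : ℝ} (hs : s ∈ Icc 0 T) {x x' t t' : ℝ} (ht : t ∈ Icc 0 T) (ht' : t' ∈ Icc 0 T)
    (hne : ¬(x = x' ∧ t = t')) :
    |u y s| + |u x t - u x' t'| / (|x - x'| + √|t - t'|) ≤ norm11 T u := by
  obtain ⟨C, hbound, hholder⟩ := hu.exists_bound
  rw [Real.sqrt_eq_rpow]
  refine add_le_add (le_csSup ⟨C, ?_⟩ ⟨y, s, hs.1, hs.2, rfl⟩)
    (le_csSup ⟨C, ?_⟩ ⟨x, t, x', t', ht.1, ht.2, ht'.1, ht'.2, hne, rfl⟩)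
  · rintro _ ⟨x, t, h0, hT, rfl⟩
    exact hbound x t ⟨h0, hT⟩
  · rintro _ ⟨x, t, x', t', h0, hT, h0', hT', hne, rfl⟩
    rw [← Real.sqrt_eq_rpow, div_le_iff₀ (abs_sub_add_sqrt_abs_sub_pos hne)]
    exact hholder x x' t ⟨h0, hT⟩ t' ⟨h0', hT'⟩

lemma HolderClass.boundedLipschitzWith (hu : HolderClass {p : ℝ × ℝ | 0 ≤ p.2 ∧ p.2 ≤ T} 1 u)
    {R : ℝ≥0} (hR : norm11 T u ≤ R) {t : ℝ} (ht : t ∈ Icc 0 T) :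
    BoundedLipschitzWith R (u · t) := by
  refine ⟨fun x => ?_, LipschitzWith.of_dist_le_mul fun x x' => ?_⟩
  · have h := hu.abs_add_div_le_norm11 x ht (x := 0) (x' := 1) ht ht (by simp)
    exact (le_add_of_nonneg_right (by positivity)).trans (h.trans hR)
  · obtain rfl | hx := eq_or_ne x x'
    · simp
    have h := hu.abs_add_div_le_norm11 x ht (x := x) (x' := x') ht ht (by simp [hx])
    rw [sub_self t, abs_zero, Real.sqrt_zero, add_zero] at h
    rw [Real.dist_eq, Real.dist_eq, ← div_le_iff₀ (abs_pos.2 (sub_ne_zero.2 hx))]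
    exact (le_add_of_nonneg_left (abs_nonneg _)).trans (h.trans hR)

lemma C21.isBoundedSolution {σ β F : ℝ → ℝ → ℝ} (hw : C21 {p : ℝ × ℝ | 0 < p.2 ∧ p.2 ≤ T} w)
    (hw' : HolderClass {p : ℝ × ℝ | 0 ≤ p.2 ∧ p.2 ≤ T} 1 w)
    (heq : ∀ x t, 0 < t → t ≤ T →
      pdT w x t - σ x t ^ 2 * pdXX w x t + β x t * pdX w x t = F x t) :
    IsBoundedSolution T σ β F w where
  continuousOn := hw'.continuousOn
  bounded := hw'.exists_bound.imp fun _ hC => hC.1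
  eqn x t ht := by
    rw [← heq x t ht.1 ht.2]
    obtain ⟨-, hxx, ht'⟩ := hw.1 (x, t) ht
    exact hasParabolicDerivAt_of_hasDerivAt (σ x t) (β x t) ht'.hasDerivAt
      (fun y => (hw.1 (y, t) ht).1.hasDerivAt) hxx.hasDerivAt

end FunctionClasses

/-! ### The coefficients of the linearized problem -/

section Coefficients

open Set NNReal

lemma ftil_eq_expNegInvGlue {E : ℝ} (hE : 0 < E) : ftil E = fun s => expNegInvGlue (s / E) := by
  funext s
  unfold ftil expNegInvGlue
  by_cases hs : 0 < s
  · simp [hs, (div_pos hs hE).not_ge]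
  · simp [hs, div_nonpos_of_nonpos_of_nonneg (not_lt.1 hs) hE.le]

lemma contDiff_ftil {E : ℝ} (hE : 0 < E) : ContDiff ℝ 1 (ftil E) := by
  rw [ftil_eq_expNegInvGlue hE]
  exact expNegInvGlue.contDiff.comp (contDiff_id.div_const E)

lemma locallyLipschitzOn_of_contDiffAt {V W : Type*} [NormedAddCommGroup V] [NormedSpace ℝ V]
    [NormedAddCommGroup W] [NormedSpace ℝ W] {g : V → W} {K : Set V}
    (hg : ∀ x ∈ K, ContDiffAt ℝ 1 g x) : LocallyLipschitzOn K g := fun x hx =>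
  let ⟨L, s, hs, hL⟩ := (hg x hx).exists_lipschitzOnWith
  ⟨L, s, mem_nhdsWithin_of_mem_nhds hs, hL⟩

lemma BoundedLipschitzWith.mapsTo_Icc {X : Type*} [PseudoEMetricSpace X] {f : X → ℝ} {C : ℝ≥0}
    (hf : BoundedLipschitzWith C f) : MapsTo f univ (Icc (-C) C) :=
  fun x _ => abs_le.1 (hf.norm_le x)

lemma BoundedLipschitzWith.intervalIntegral {X V : Type*} [PseudoMetricSpace X]
    [NormedAddCommGroup V] [NormedSpace ℝ V] {g : X → ℝ → V} {C : ℝ≥0} {t : ℝ}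
    (ht : t ∈ Icc (0 : ℝ) 1) (hg : ∀ s ∈ Icc 0 t, BoundedLipschitzWith C (g · s))
    (hint : ∀ x, IntervalIntegrable (g x) volume 0 t) :
    BoundedLipschitzWith C fun x => ∫ s in (0 : ℝ)..t, g x s := by
  have hle {f : ℝ → V} {B : ℝ} (hB : 0 ≤ B) (hf : ∀ s ∈ Icc 0 t, ‖f s‖ ≤ B) :
      ‖∫ s in (0 : ℝ)..t, f s‖ ≤ B := by
    refine (intervalIntegral.norm_integral_le_of_norm_le_const fun s hs => hf s ?_).trans
      (mul_le_of_le_one_right hB (by simpa [abs_of_nonneg ht.1] using ht.2))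
    rw [uIoc_of_le ht.1] at hs
    exact Ioc_subset_Icc_self hs
  refine ⟨fun x => hle C.2 fun s hs => (hg s hs).norm_le x,
    LipschitzWith.of_dist_le_mul fun x x' => ?_⟩
  rw [dist_eq_norm, ← intervalIntegral.integral_sub (hint x) (hint x')]
  refine hle (by positivity) fun s hs => ?_
  rw [← dist_eq_norm]
  exact (hg s hs).lipschitz.dist_le_mul x x'

lemma yfun_nonneg {y0 : ℝ → ℝ} (hy0 : ∀ x, 0 ≤ y0 x) (E A : ℝ) (u : ℝ → ℝ → ℝ) (x t : ℝ) :
    0 ≤ yfun E A y0 u x t :=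
  mul_nonneg (hy0 x) (Real.exp_pos _).le

lemma exists_boundedLipschitzWith_yfun {E : ℝ} (hE : 0 < E) (A : ℝ) {y0 : ℝ → ℝ} {D : ℝ≥0}
    (hy0 : BoundedLipschitzWith D y0) (R : ℝ≥0) :
    ∃ C : ℝ≥0, ∀ (u : ℝ → ℝ → ℝ), ∀ t ∈ Icc (0 : ℝ) 1,
      (∀ s ∈ Icc 0 t, BoundedLipschitzWith R (u · s)) →
      (∀ x, ContinuousOn (u x) (Icc 0 t)) → BoundedLipschitzWith C (yfun E A y0 u · t) := by
  obtain ⟨Cf, hCf⟩ := exists_boundedLipschitzWith_comp (X := ℝ) isCompact_Icc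
    (locallyLipschitzOn_of_contDiffAt fun s (_ : s ∈ Icc (-(R : ℝ)) R) =>
      (contDiff_ftil hE).contDiffAt) R
  set D' := max D Cf
  obtain ⟨C, hC⟩ := exists_boundedLipschitzWith_comp (X := ℝ)
    (g := fun p : ℝ × ℝ => p.1 * Real.exp (-A * p.2)) (isCompact_closedBall 0 (D' : ℝ))
    (locallyLipschitzOn_of_contDiffAt fun p _ => by fun_prop) D'
  refine ⟨C, fun u t ht hu hcont => ?_⟩
  have hint (x : ℝ) : IntervalIntegrable (fun s => ftil E (u x s)) volume 0 t := by
    refine ContinuousOn.intervalIntegrable ?_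
    rw [uIcc_of_le ht.1]
    exact (contDiff_ftil hE).continuous.comp_continuousOn (hcont x)
  have hintegral := BoundedLipschitzWith.intervalIntegral ht
    (fun s hs => hCf (u · s) (hu s hs) (hu s hs).mapsTo_Icc) hint
  have hpair := (hy0.mono (le_max_left D Cf)).prodMk (hintegral.mono (le_max_right D Cf))
  exact hC _ hpair fun x _ => mem_closedBall_zero_iff.2 (hpair.norm_le x)

lemma exists_boundedLipschitzWith_coefficients {E a b : ℝ} (hE : 0 < E) (ha : 0 < a) (hb : 0 ≤ b)
    (q lam c d A sgn : ℝ) (R : ℝ≥0) :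
    ∃ C : ℝ≥0, ∀ y v v₁ v₂ : ℝ → ℝ, (∀ x, 0 ≤ y x) → BoundedLipschitzWith R y →
      BoundedLipschitzWith R v → BoundedLipschitzWith R v₁ → BoundedLipschitzWith R v₂ →
      BoundedLipschitzWith C (fun x => √lam / √(a + b * y x)) ∧
      BoundedLipschitzWith C (fun x => c / (a + b * y x)) ∧
      BoundedLipschitzWith C fun x => fitil E q b A d a sgn (y x) (v x) (v₁ x) (v₂ x) := by
  have hK : IsCompact (Icc 0 (R : ℝ)) := isCompact_Icc
  have hden (Y : ℝ) (hY : Y ∈ Icc 0 (R : ℝ)) : a + b * Y ≠ 0 :=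
    (add_pos_of_pos_of_nonneg ha (mul_nonneg hb hY.1)).ne'
  obtain ⟨Cσ, hσ⟩ := exists_boundedLipschitzWith_comp (X := ℝ) hK
    (locallyLipschitzOn_of_contDiffAt (g := fun Y => √lam / √(a + b * Y)) fun Y hY =>
      ContDiffAt.div (by fun_prop) (ContDiffAt.sqrt (by fun_prop) (hden Y hY))
        (Real.sqrt_ne_zero'.2 (add_pos_of_pos_of_nonneg ha (mul_nonneg hb hY.1)))) R
  obtain ⟨Cβ, hβ⟩ := exists_boundedLipschitzWith_comp (X := ℝ) hK
    (locallyLipschitzOn_of_contDiffAt (g := fun Y => c / (a + b * Y)) fun Y hY =>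
      ContDiffAt.div (by fun_prop) (by fun_prop) (hden Y hY)) R
  obtain ⟨CF, hF⟩ := exists_boundedLipschitzWith_comp (X := ℝ)
    (hK.prod (isCompact_closedBall (0 : ℝ × ℝ × ℝ) R))
    (locallyLipschitzOn_of_contDiffAt
      (g := fun p : ℝ × ℝ × ℝ × ℝ => fitil E q b A d a sgn p.1 p.2.1 p.2.2.1 p.2.2.2)
      fun p hp => by
        have hftil := contDiff_ftil hE
        unfold fitil
        exact ContDiffAt.div (by fun_prop) (by fun_prop) (hden p.1 hp.1)) R
  refine ⟨max (max Cσ Cβ) CF, fun y v v₁ v₂ hy hyR hv hv₁ hv₂ => ?_⟩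
  have hyIcc : MapsTo y univ (Icc 0 (R : ℝ)) := fun x _ => ⟨hy x, le_of_abs_le (hyR.norm_le x)⟩
  have htriple := hv.prodMk (hv₁.prodMk hv₂)
  exact ⟨(hσ y hyR hyIcc).mono (le_max_of_le_left (le_max_left _ _)),
    (hβ y hyR hyIcc).mono (le_max_of_le_left (le_max_right _ _)),
    (hF _ (hyR.prodMk htriple) fun x hx =>
      ⟨hyIcc hx, mem_closedBall_zero_iff.2 (htriple.norm_le x)⟩).mono (le_max_right _ _)⟩

end Coefficients

/-! ### The iteration operator -/

section IterationOperator

open Set Filter Topology NNReal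

/-- `w` solves the linear Cauchy problem on `ℝ × [0, T]` that defines the `i`-th component of the
iteration operator at `(u₁, u₂)`, with initial value `u0`. Here `u = uᵢ` and `sgn = (-1)^i`, and all
other parameters are those with index `i`. -/
def IsLinearizedSolution (E q lam a b c d A sgn T : ℝ) (u0 y0 : ℝ → ℝ)
    (u u₁ u₂ w : ℝ → ℝ → ℝ) : Prop :=
  C21 {p : ℝ × ℝ | 0 < p.2 ∧ p.2 ≤ T} w ∧
    HolderClass {p : ℝ × ℝ | 0 ≤ p.2 ∧ p.2 ≤ T} 1 w ∧
    (∀ x, w x 0 = u0 x) ∧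
    (∀ x t, 0 < t → t ≤ T →
      pdT w x t
        - lam / (a + b * yfun E A y0 u x t) * pdXX w x t
        + c / (a + b * yfun E A y0 u x t) * pdX w x t
      = fitil E q b A d a sgn (yfun E A y0 u x t) (u x t) (u₁ x t) (u₂ x t))

lemma eventually_norm11_le_of_isLinearizedSolution {E lam a b M : ℝ} {u0 y0 : ℝ → ℝ} {L₀ D : ℝ≥0}
    (hE : 0 < E) (hlam : 0 ≤ lam) (ha : 0 < a) (hb : 0 ≤ b) (hu0 : BoundedLipschitzWith L₀ u0)
    (hy0 : ∀ x, 0 ≤ y0 x) (hy0' : BoundedLipschitzWith D y0)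
    (hM : L₀ + L₀ * (1 + lam / a) < M) (q c d A sgn : ℝ) (R : ℝ≥0) :
    ∀ᶠ T : ℝ in 𝓝[>] 0, ∀ u u₁ u₂ w : ℝ → ℝ → ℝ,
      (∀ v ∈ ({u, u₁, u₂} : Set (ℝ → ℝ → ℝ)),
        HolderClass {p : ℝ × ℝ | 0 ≤ p.2 ∧ p.2 ≤ T} 1 v ∧ norm11 T v ≤ R) →
      IsLinearizedSolution E q lam a b c d A sgn T u0 y0 u u₁ u₂ w → norm11 T w ≤ M := by
  obtain ⟨Cy, hCy⟩ := exists_boundedLipschitzWith_yfun hE A hy0' R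
  obtain ⟨C, hC⟩ :=
    exists_boundedLipschitzWith_coefficients hE ha hb q lam c d A sgn (max Cy R)
  have hS : √(lam / a) ^ 2 = lam / a := Real.sq_sqrt (by positivity)
  filter_upwards [eventually_forall_norm11_le (S := √(lam / a)) (by rwa [hS]) C,
    Ioc_mem_nhdsGT one_pos] with T hT ⟨_, hT_one⟩ u u₁ u₂ w hu ⟨hw, hw', hw0, heq⟩
  have hlip (v : ℝ → ℝ → ℝ) (hv : v ∈ ({u, u₁, u₂} : Set (ℝ → ℝ → ℝ))) (t : ℝ)
      (ht : t ∈ Icc 0 T) : BoundedLipschitzWith R (v · t) :=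
    (hu v hv).1.boundedLipschitzWith (hu v hv).2 ht
  let y := yfun E A y0 u
  have hy (x t : ℝ) : 0 ≤ y x t := yfun_nonneg hy0 E A u x t
  have hcont (x : ℝ) : ContinuousOn (u x) (Icc 0 T) :=
    (hu u (by simp)).1.continuousOn.uncurry_left x (mem_univ x)
  have hcoeff (t : ℝ) (ht : t ∈ Ioc 0 T) := by
    have ht' : t ∈ Icc 0 T := Ioc_subset_Icc_self ht
    have hsub : Icc 0 t ⊆ Icc 0 T := Icc_subset_Icc_right ht.2
    have hyC : BoundedLipschitzWith Cy (y · t) :=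
      hCy u t ⟨ht'.1, ht'.2.trans hT_one⟩ (fun s hs => hlip u (by simp) s (hsub hs))
        fun x => (hcont x).mono hsub
    have hR (v : ℝ → ℝ → ℝ) (hv : v ∈ ({u, u₁, u₂} : Set (ℝ → ℝ → ℝ))) :=
      (hlip v hv t ht').mono (le_max_right Cy R)
    exact hC _ _ _ _ (hy · t) (hyC.mono (le_max_left _ _)) (hR u (by simp)) (hR u₁ (by simp))
      (hR u₂ (by simp))
  refine hT (fun x t => √lam / √(a + b * y x t)) _ _ w
    (hw.isBoundedSolution hw' fun x t ht htT => ?_) (fun x t _ => ?_)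
    (fun t ht => (hcoeff t ht).1) (fun t ht => (hcoeff t ht).2.1) (fun t ht => (hcoeff t ht).2.2)
    (by simpa only [hw0] using hu0)
  · rw [div_pow, Real.sq_sqrt hlam, Real.sq_sqrt (by have := hy x t; positivity)]
    exact heq x t ht htT
  · rw [abs_of_nonneg (by positivity), Real.sqrt_div hlam]
    gcongr
    exact le_add_of_nonneg_right (mul_nonneg hb (hy x t))

lemma exists_boundedLipschitzWith {f : ℝ → ℝ}
    (hlip : ∃ L ≥ 0, ∀ x x', |f x - f x'| ≤ L * |x - x'|)
    (hbdd : ∃ C, ∀ x, |f x| ≤ C) : ∃ D : ℝ≥0, BoundedLipschitzWith D f := by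
  obtain ⟨L, hL, hlip⟩ := hlip
  obtain ⟨C, hC⟩ := hbdd
  refine ⟨max C.toNNReal L.toNNReal, fun x => (hC x).trans ?_, ?_⟩
  · exact (Real.le_coe_toNNReal C).trans (by simp)
  · refine LipschitzWith.weaken (LipschitzWith.of_dist_le_mul fun x x' => ?_) (le_max_right _ _)
    simpa only [Real.dist_eq, Real.coe_toNNReal L hL] using hlip x x'

theorem invariant_ball_general {E : ℝ} (q : ℝ) {lam a b : Fin 2 → ℝ} (c d A : Fin 2 → ℝ)
    (hE : 0 < E) (hlam : ∀ i, 0 ≤ lam i) (ha : ∀ i, 0 < a i) (hb : ∀ i, 0 ≤ b i)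
    {u0 y0 : Fin 2 → ℝ → ℝ} (hy0 : ∀ i x, 0 ≤ y0 i x)
    (hu0 : ∀ i, ∃ D : ℝ≥0, BoundedLipschitzWith D (u0 i))
    (hy0' : ∀ i, ∃ D : ℝ≥0, BoundedLipschitzWith D (y0 i)) :
    ∃ M : Fin 2 → ℝ, (∀ i, 0 < M i) ∧ ∃ T : ℝ, 0 < T ∧ T ≤ 1 ∧
      ∀ u : Fin 2 → ℝ → ℝ → ℝ,
        (∀ i, HolderClass {p : ℝ × ℝ | 0 ≤ p.2 ∧ p.2 ≤ T} 1 (u i) ∧ norm11 T (u i) ≤ M i) →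
        ∀ w : Fin 2 → ℝ → ℝ → ℝ,
          (∀ i, IsLinearizedSolution E q (lam i) (a i) (b i) (c i) (d i) (A i)
            ((-1 : ℝ) ^ ((i : ℕ) + 1)) T (u0 i) (y0 i) (u i) (u 0) (u 1) (w i)) →
          ∀ i, norm11 T (w i) ≤ M i := by
  choose L₀ hL₀ using hu0
  choose D hD using hy0'
  let M (i : Fin 2) : ℝ := L₀ i + L₀ i * (1 + lam i / a i) + 1
  have hratio (i : Fin 2) : 0 ≤ lam i / a i := div_nonneg (hlam i) (ha i).le
  obtain ⟨R, hR⟩ := Finite.exists_le fun i => (M i).toNNReal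
  have hcomponent (i : Fin 2) := eventually_norm11_le_of_isLinearizedSolution hE (hlam i) (ha i)
    (hb i) (hL₀ i) (hy0 i) (hD i) (lt_add_one _) q (c i) (d i) (A i) ((-1 : ℝ) ^ ((i : ℕ) + 1)) R
  obtain ⟨T, hT, hT0, hT1⟩ :=
    ((eventually_all.2 hcomponent).and (Ioc_mem_nhdsGT one_pos)).exists
  refine ⟨M, fun i => ?_, T, hT0, hT1, fun u hu w hw i => hT i (u i) (u 0) (u 1) (w i) ?_ (hw i)⟩
  · have := hratio i
    positivity
  · have hu' (j : Fin 2) :=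
      And.intro (hu j).1 ((hu j).2.trans (Real.toNNReal_le_iff_le_coe.1 (hR j)))
    rintro v (rfl | rfl | rfl)
    exacts [hu' i, hu' 0, hu' 1]

end IterationOperator

/-- Lemma: the invariant ball for the iteration operator. -/
theorem invariant_ball
    (E q : ℝ) (lam a b c d A : Fin 2 → ℝ)
    (hE : 0 < E) (hq : 0 < q)
    (hlam : ∀ i, 0 < lam i) (ha : ∀ i, 0 < a i) (hb : ∀ i, 0 < b i)
    (hc : ∀ i, 0 < c i) (hd : ∀ i, 0 < d i) (hA : ∀ i, 0 < A i)
    (u0 y0 : Fin 2 → ℝ → ℝ)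
    (hu0nonneg : ∀ i x, 0 ≤ u0 i x) (hy0nonneg : ∀ i x, 0 ≤ y0 i x)
    (hu0lip : ∀ i, ∃ L ≥ 0, ∀ x x', |u0 i x - u0 i x'| ≤ L * |x - x'|)
    (hy0lip : ∀ i, ∃ L ≥ 0, ∀ x x', |y0 i x - y0 i x'| ≤ L * |x - x'|)
    (hu0bdd : ∀ i, ∃ C, ∀ x, |u0 i x| ≤ C)
    (hy0bdd : ∀ i, ∃ C, ∀ x, |y0 i x| ≤ C) :
    ∃ M : Fin 2 → ℝ, (∀ i, 0 < M i) ∧ ∃ T : ℝ, 0 < T ∧ T ≤ 1 ∧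
      ∀ u : Fin 2 → ℝ → ℝ → ℝ,
        (∀ i, HolderClass {p : ℝ × ℝ | 0 ≤ p.2 ∧ p.2 ≤ T} 1 (u i) ∧
          norm11 T (u i) ≤ M i) →
        ∀ w : Fin 2 → ℝ → ℝ → ℝ,
          (∀ i, C21 {p : ℝ × ℝ | 0 < p.2 ∧ p.2 ≤ T} (w i) ∧
            HolderClass {p : ℝ × ℝ | 0 ≤ p.2 ∧ p.2 ≤ T} 1 (w i) ∧
            (∀ x, w i x 0 = u0 i x) ∧
            (∀ x t, 0 < t → t ≤ T →
              pdT (w i) x t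
                - lam i / (a i + b i * yfun E (A i) (y0 i) (u i) x t) * pdXX (w i) x t
                + c i / (a i + b i * yfun E (A i) (y0 i) (u i) x t) * pdX (w i) x t
              = fitil E q (b i) (A i) (d i) (a i) ((-1 : ℝ) ^ ((i : ℕ) + 1))
                  (yfun E (A i) (y0 i) (u i) x t) (u i x t) (u 0 x t) (u 1 x t))) →
          ∀ i, norm11 T (w i) ≤ M i := by
  exact invariant_ball_general q c d A hE (hlam · |>.le) ha (hb · |>.le) hy0nonneg
    (fun i => exists_boundedLipschitzWith (hu0lip i) (hu0bdd i))
    fun i => exists_boundedLipschitzWith (hy0lip i) (hy0bdd i)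
end

section
/- Let u_{1,0}, u_{2,0}, y_{1,0}, y_{2,0} be nonnegative bounded functions on ℝ, and let M = max_{i=1,2} ‖u_{i,0}‖_∞, α = max_{i=1,2} A_i b_i ‖y_{i,0}‖_∞ / a_i, β = max_{i=1,2} d_i/(A_i b_i), and φ(t) = (M+β)e^{αt} − β. Then for i = 1,2, every t ≥ 0 and every y with 0 ≤ y ≤ ‖y_{i,0}‖_∞, one has φ'(t) ≥ f̃_i(y, φ(t), φ(t)); that is, the pair (φ,φ) is an upper solution, and (0,0) is a (lower) solution since f̃_i(y,0,0) = 0, of the system (w_i)_t − α_i(y_i)(w_i)_{xx} + β_i(y_i)(w_i)_x = f̃_i(y_i, w_1, w_2) whenever 0 ≤ y_i ≤ ‖y_{i,0}‖_∞. -/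
open MeasureTheory

/-!
The function `φ(t) = (M + β) e^{αt} - β` solves `φ' = α (φ + β)`. On the diagonal `u₁ = u₂ = φ` the
exchange term of the reaction vanishes, and since `d ≤ A b β` and `0 ≤ f̃ ≤ 1`, what remains is at
most `A b (φ + β) y / (a + b y) ≤ (A b ‖y₀‖_∞ / a) (φ + β) ≤ α (φ + β)`.
-/

theorem le_max_fin_two {R : Type*} [LinearOrder R] (f : Fin 2 → R) (i : Fin 2) :
    f i ≤ max (f 0) (f 1) := by
  fin_cases i
  exacts [le_max_left _ _, le_max_right _ _]

theorem supAbs_nonneg (g : ℝ → ℝ) : 0 ≤ supAbs g :=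
  Real.iSup_nonneg fun _ => abs_nonneg _

theorem ftil_of_nonpos (E : ℝ) {s : ℝ} (hs : s ≤ 0) : ftil E s = 0 :=
  if_neg hs.not_gt

theorem ftil_of_pos (E : ℝ) {s : ℝ} (hs : 0 < s) : ftil E s = Real.exp (-(E / s)) :=
  if_pos hs

theorem ftil_nonneg (E s : ℝ) : 0 ≤ ftil E s := by
  rcases le_or_gt s 0 with hs | hs
  · exact (ftil_of_nonpos E hs).ge
  · exact ftil_of_pos E hs ▸ Real.exp_nonneg _

theorem ftil_le_one {E : ℝ} (hE : 0 ≤ E) (s : ℝ) : ftil E s ≤ 1 := by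
  rcases le_or_gt s 0 with hs | hs
  · exact (ftil_of_nonpos E hs).trans_le zero_le_one
  · rw [ftil_of_pos E hs, Real.exp_le_one_iff, neg_nonpos]
    exact div_nonneg hE hs.le

section Reaction

variable (q s : ℝ)

theorem fitil_diag (E b A d a y u : ℝ) :
    fitil E q b A d a s y u u u = (b * A * u + d) * y * ftil E u / (a + b * y) := by
  rw [fitil, sub_self, mul_zero, add_zero]

theorem fitil_zero (E b A d a y : ℝ) : fitil E q b A d a s y 0 0 0 = 0 := by
  rw [fitil_diag, ftil_of_nonpos E le_rfl, mul_zero, zero_div]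

theorem fitil_diag_le {E a b d A y Y u α β : ℝ} (hE : 0 ≤ E) (ha : 0 < a) (hb : 0 ≤ b)
    (hA : 0 ≤ A) (hβ : d ≤ A * b * β) (hα : A * b * Y / a ≤ α) (hy : 0 ≤ y) (hyY : y ≤ Y)
    (hu : 0 ≤ u + β) :
    fitil E q b A d a s y u u u ≤ α * (u + β) := by
  have hY : 0 ≤ Y := hy.trans hyY
  have hf_nonneg : 0 ≤ ftil E u := ftil_nonneg E u
  have hf_le_one : ftil E u ≤ 1 := ftil_le_one hE u
  have hcoeff : b * A * u + d ≤ A * b * (u + β) := by linarith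
  have hdenom : a ≤ a + b * y := le_add_of_nonneg_right (mul_nonneg hb hy)
  calc fitil E q b A d a s y u u u
      = (b * A * u + d) * y * ftil E u / (a + b * y) := fitil_diag q s E b A d a y u
    _ ≤ A * b * (u + β) * Y * 1 / a := by gcongr
    _ = A * b * Y / a * (u + β) := by ring
    _ ≤ α * (u + β) := by gcongr

end Reaction

/-- The solution `(M + β) e^{αt} - β` of `φ' = α (φ + β)`, `φ(0) = M`; `phiUp` is the case where
the three constants are the maxima built from the data. -/
noncomputable def shiftedExp (M α β t : ℝ) : ℝ := (M + β) * Real.exp (α * t) - β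

theorem hasDerivAt_shiftedExp (M α β t : ℝ) :
    HasDerivAt (shiftedExp M α β) (α * (shiftedExp M α β t + β)) t := by
  have hexp : HasDerivAt (fun t => (M + β) * Real.exp (α * t) - β)
      ((M + β) * (Real.exp (α * t) * α)) t :=
    ((hasDerivAt_const_mul α).exp.const_mul (M + β)).sub_const β
  convert! hexp using 1
  rw [shiftedExp]
  ring

theorem shiftedExp_add_nonneg {M β : ℝ} (hMβ : 0 ≤ M + β) (α t : ℝ) :
    0 ≤ shiftedExp M α β t + β := by
  rw [shiftedExp, sub_add_cancel]
  exact mul_nonneg hMβ (Real.exp_nonneg _)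

theorem upper_and_lower_solutions_general {ι : Type*} {E M α β : ℝ} {a b d A Y : ι → ℝ}
    (hE : 0 ≤ E) (ha : ∀ i, 0 < a i) (hb : ∀ i, 0 < b i) (hA : ∀ i, 0 < A i)
    (hα : ∀ i, A i * b i * Y i / a i ≤ α) (hβ : ∀ i, d i / (A i * b i) ≤ β) (hMβ : 0 ≤ M + β)
    (q : ℝ) (s : ι → ℝ) (i : ι) :
    (∀ t y : ℝ, 0 ≤ y → y ≤ Y i →
      fitil E q (b i) (A i) (d i) (a i) (s i) y
          (shiftedExp M α β t) (shiftedExp M α β t) (shiftedExp M α β t)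
        ≤ deriv (shiftedExp M α β) t) ∧
    ∀ y : ℝ, fitil E q (b i) (A i) (d i) (a i) (s i) y 0 0 0 = 0 := by
  have hdβ : d i ≤ A i * b i * β := (div_le_iff₀' (mul_pos (hA i) (hb i))).mp (hβ i)
  refine ⟨fun t y hy hyY => ?_, fun y => fitil_zero q (s i) E (b i) (A i) (d i) (a i) y⟩
  rw [(hasDerivAt_shiftedExp M α β t).deriv]
  exact fitil_diag_le q (s i) hE (ha i) (hb i).le (hA i).le hdβ (hα i) hy hyY
    (shiftedExp_add_nonneg hMβ α t)

/-- `(φ,φ)` is an upper solution (`φ'(t) ≥ f̃ᵢ(y,φ(t),φ(t))` for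
`0 ≤ y ≤ ‖y_{i,0}‖_∞`) and `(0,0)` is a (lower) solution (`f̃ᵢ(y,0,0) = 0`) of the
reaction–diffusion system. -/
theorem upper_and_lower_solutions
    (E q : ℝ) (lam a b c d A : Fin 2 → ℝ)
    (hE : 0 < E) (hq : 0 < q)
    (hlam : ∀ i, 0 < lam i) (ha : ∀ i, 0 < a i) (hb : ∀ i, 0 < b i)
    (hc : ∀ i, 0 < c i) (hd : ∀ i, 0 < d i) (hA : ∀ i, 0 < A i)
    (u0 y0 : Fin 2 → ℝ → ℝ)
    (hu0nonneg : ∀ i x, 0 ≤ u0 i x) (hy0nonneg : ∀ i x, 0 ≤ y0 i x)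
    (hu0bdd : ∀ i, ∃ C, ∀ x, |u0 i x| ≤ C)
    (hy0bdd : ∀ i, ∃ C, ∀ x, |y0 i x| ≤ C) :
    ∀ i : Fin 2,
      (∀ t y : ℝ, 0 ≤ t → 0 ≤ y → y ≤ supAbs (y0 i) →
        fitil E q (b i) (A i) (d i) (a i) ((-1 : ℝ) ^ ((i : ℕ) + 1)) y
            (phiUp a b d A u0 y0 t) (phiUp a b d A u0 y0 t) (phiUp a b d A u0 y0 t)
          ≤ deriv (phiUp a b d A u0 y0) t) ∧
      (∀ y : ℝ, 0 ≤ y → y ≤ supAbs (y0 i) →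
        fitil E q (b i) (A i) (d i) (a i) ((-1 : ℝ) ^ ((i : ℕ) + 1)) y 0 0 0 = 0) := by
  intro i
  obtain ⟨hupper, hzero⟩ := upper_and_lower_solutions_general hE.le ha hb hA
    (le_max_fin_two fun i => A i * b i * supAbs (y0 i) / a i)
    (le_max_fin_two fun i => d i / (A i * b i))
    (add_nonneg (le_max_of_le_left (supAbs_nonneg (u0 0)))
      (le_max_of_le_left (div_pos (hd 0) (mul_pos (hA 0) (hb 0))).le))
    q (fun i => (-1) ^ ((i : ℕ) + 1)) i
  exact ⟨fun t y _ => hupper t y, fun y _ _ => hzero y⟩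
end
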